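/- Let π be a probability measure on [0,1]^p, let C₀* > 0, and let f, f₀ : [0,1]^p → ℝ be measurable functions with ‖f‖_∞ ≤ C₀* and ‖f₀‖_∞ ≤ C₀*. Then for every subset P ⊆ {1, …, p}, |c_{P,π}(f) − c_{P,π}(f₀)| ≤ 4C₀* · ‖f − f₀‖_{L²(π)}. -/

import Mathlib

open MeasureTheory

/-- The unit hypercube `[0,1]^p`. -/
abbrev UnitCube (p : ℕ) := Fin p → Set.Icc (0 : ℝ) 1

/-- The sub-σ-algebra of `[0,1]^p` generated by the projection onto the coordinates in `P`. -/
def coordSubAlg (p : ℕ) (P : Finset (Fin p)) : MeasurableSpace (UnitCube p) :=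
  MeasurableSpace.comap (fun x (i : P) => x i) MeasurableSpace.pi

/-- The cost functional `c_{P,π}(g) = E[(E[g(X) | X_P])²] - (E[g(X)])²` for `X ∼ π`,
with `c_{∅,π}(g) := 0`. -/
noncomputable def cost {p : ℕ} (π : Measure (UnitCube p)) (P : Finset (Fin p))
    (g : UnitCube p → ℝ) : ℝ :=
  if P = ∅ then 0 else
    (∫ x, ((π[g | coordSubAlg p P]) x) ^ 2 ∂π) - (∫ x, g x ∂π) ^ 2

/-!
The cost `c_P(g)` is the variance of `E[g(X) | X_P]`, also for `P = ∅`, where conditioning on no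
coordinate gives a constant. A difference of variances is a covariance,
`Var U - Var V = Cov(U + V, U - V)`, which Cauchy–Schwarz bounds by the product of the standard
deviations of `U + V` and `U - V`. Conditioning is linear and does not increase the variance, so
`|c_P(f) - c_P(f₀)| ≤ √Var(f + f₀) * √Var(f - f₀)`. For functions bounded by `C₀` the first factor
is at most `2 C₀`, so this route gives half of the constant `4 C₀`.
-/

open ProbabilityTheory

section Variance

variable {Ω : Type*} {m m₀ : MeasurableSpace Ω} {μ : Measure[m₀] Ω} {X Y : Ω → ℝ}

lemma abs_covariance_le_sqrt_variance_mul_sqrt_variance [IsFiniteMeasure μ]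
    (hX : MemLp X 2 μ) (hY : MemLp Y 2 μ) :
    |cov[X, Y; μ]| ≤ √Var[X; μ] * √Var[Y; μ] := by
  have quadratic_nonneg (t : ℝ) :
      0 ≤ Var[Y; μ] * (t * t) + 2 * cov[X, Y; μ] * t + Var[X; μ] := by
    calc 0 ≤ Var[X + t • Y; μ] := variance_nonneg _ _
      _ = Var[Y; μ] * (t * t) + 2 * cov[X, Y; μ] * t + Var[X; μ] := by
        rw [variance_add hX (hY.const_smul t), covariance_smul_right, variance_smul]
        ring
  have discrim_nonpos := discrim_le_zero quadratic_nonneg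
  rw [← Real.sqrt_mul (variance_nonneg X μ)]
  apply Real.abs_le_sqrt
  unfold discrim at discrim_nonpos
  linarith

lemma variance_sub_variance_eq_covariance [IsFiniteMeasure μ]
    (hX : MemLp X 2 μ) (hY : MemLp Y 2 μ) :
    Var[X; μ] - Var[Y; μ] = cov[X + Y, X - Y; μ] := by
  rw [covariance_add_left hX hY (hX.sub hY), covariance_sub_right hX hX hY,
    covariance_sub_right hY hX hY, covariance_comm Y X, covariance_self hX.aemeasurable,
    covariance_self hY.aemeasurable]
  ring

lemma variance_condExp_le [IsProbabilityMeasure μ] (hm : m ≤ m₀) (hX : MemLp X 2 μ) :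
    Var[μ[X | m]; μ] ≤ Var[X; μ] := by
  have condVar_nonneg : 0 ≤ ∫ ω, Var[X; μ | m] ω ∂μ :=
    integral_nonneg_of_ae (condExp_nonneg (.of_forall fun _ ↦ sq_nonneg _))
  linarith [integral_condVar_add_variance_condExp hm hX]

lemma abs_variance_condExp_sub_variance_condExp_le [IsProbabilityMeasure μ] (hm : m ≤ m₀)
    (hX : MemLp X 2 μ) (hY : MemLp Y 2 μ) :
    |Var[μ[X | m]; μ] - Var[μ[Y | m]; μ]| ≤ √Var[X + Y; μ] * √Var[X - Y; μ] := by
  have hX' : MemLp (μ[X | m]) 2 μ := hX.condExp one_le_two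
  have hY' : MemLp (μ[Y | m]) 2 μ := hY.condExp one_le_two
  have hXi : Integrable X μ := hX.integrable one_le_two
  have hYi : Integrable Y μ := hY.integrable one_le_two
  calc |Var[μ[X | m]; μ] - Var[μ[Y | m]; μ]|
      = |cov[μ[X | m] + μ[Y | m], μ[X | m] - μ[Y | m]; μ]| := by
        rw [variance_sub_variance_eq_covariance hX' hY']
    _ ≤ √Var[μ[X | m] + μ[Y | m]; μ] * √Var[μ[X | m] - μ[Y | m]; μ] :=
        abs_covariance_le_sqrt_variance_mul_sqrt_variance (hX'.add hY') (hX'.sub hY')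
    _ = √Var[μ[X + Y | m]; μ] * √Var[μ[X - Y | m]; μ] := by
        rw [variance_congr (condExp_add hXi hYi m), variance_congr (condExp_sub hXi hYi m)]
    _ ≤ √Var[X + Y; μ] * √Var[X - Y; μ] := by
        gcongr
        · exact variance_condExp_le hm (hX.add hY)
        · exact variance_condExp_le hm (hX.sub hY)

lemma sqrt_variance_le_of_abs_le [IsProbabilityMeasure μ] {C : ℝ} (hX : AEMeasurable X μ)
    (hC : ∀ᵐ ω ∂μ, |X ω| ≤ C) : √Var[X; μ] ≤ C := by
  obtain ⟨ω, hω⟩ := hC.exists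
  rw [Real.sqrt_le_left ((abs_nonneg _).trans hω)]
  calc Var[X; μ] ≤ ((C - -C) / 2) ^ 2 :=
        variance_le_sq_of_bounded (hC.mono fun _ ↦ abs_le.mp) hX
    _ = C ^ 2 := by ring

end Variance

section Cost

variable {p : ℕ}

lemma coordSubAlg_le (P : Finset (Fin p)) : coordSubAlg p P ≤ MeasurableSpace.pi :=
  Measurable.comap_le (by fun_prop)

lemma coordSubAlg_empty : coordSubAlg p ∅ = ⊥ := by
  have projection_const :
      (fun (x : UnitCube p) (i : (∅ : Finset (Fin p))) ↦ x i) = fun _ ↦ isEmptyElim :=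
    Subsingleton.elim _ _
  rw [coordSubAlg, projection_const, MeasurableSpace.comap_const]

lemma cost_eq_variance_condExp (π : Measure (UnitCube p)) [IsProbabilityMeasure π]
    {g : UnitCube p → ℝ} (hg : MemLp g 2 π) (P : Finset (Fin p)) :
    cost π P g = Var[π[g | coordSubAlg p P]; π] := by
  rcases eq_or_ne P ∅ with rfl | hP
  · simp [cost, coordSubAlg_empty, condExp_bot, variance_eq_integral aemeasurable_const]
  · rw [cost, if_neg hP, variance_eq_sub (hg.condExp one_le_two),
      integral_condExp (coordSubAlg_le P)]
    simp only [Pi.pow_apply]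

end Cost

theorem stmt4_general {p : ℕ} (π : Measure (UnitCube p)) [IsProbabilityMeasure π]
    {f f₀ : UnitCube p → ℝ} (hf : MemLp f 2 π) (hf₀ : MemLp f₀ 2 π) (P : Finset (Fin p)) :
    |cost π P f - cost π P f₀| ≤ √Var[f + f₀; π] * √(∫ x, |f x - f₀ x| ^ 2 ∂π) := by
  rw [cost_eq_variance_condExp π hf, cost_eq_variance_condExp π hf₀]
  calc |Var[π[f | coordSubAlg p P]; π] - Var[π[f₀ | coordSubAlg p P]; π]|
      ≤ √Var[f + f₀; π] * √Var[f - f₀; π] :=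
        abs_variance_condExp_sub_variance_condExp_le (coordSubAlg_le P) hf hf₀
    _ ≤ √Var[f + f₀; π] * √(∫ x, |f x - f₀ x| ^ 2 ∂π) := by
        gcongr
        simpa only [sq_abs, Pi.pow_apply, Pi.sub_apply] using
          variance_le_expectation_sq (hf.sub hf₀).aestronglyMeasurable

/-- Theorem 1 of the paper. If `f, f₀ : [0,1]^p → ℝ` are measurable and
bounded in supremum norm by `C₀* > 0`, then for every subset `P ⊆ [p]`,
`|c_{P,π}(f) - c_{P,π}(f₀)| ≤ 4 C₀* ‖f - f₀‖_{L²(π)}`. -/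
theorem stmt4 {p : ℕ} (π : Measure (UnitCube p)) [IsProbabilityMeasure π]
    (C₀ : ℝ) (hC₀ : 0 < C₀)
    (f f₀ : UnitCube p → ℝ) (hf : Measurable f) (hf₀ : Measurable f₀)
    (hfb : ∀ x, |f x| ≤ C₀) (hf₀b : ∀ x, |f₀ x| ≤ C₀) :
    ∀ P : Finset (Fin p),
      |cost π P f - cost π P f₀| ≤
        4 * C₀ * Real.sqrt (∫ x, |f x - f₀ x| ^ 2 ∂π) := by
  intro P
  have hfL : MemLp f 2 π := .of_bound hf.aestronglyMeasurable C₀ (.of_forall hfb)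
  have hf₀L : MemLp f₀ 2 π := .of_bound hf₀.aestronglyMeasurable C₀ (.of_forall hf₀b)
  refine (stmt4_general π hfL hf₀L P).trans ?_
  gcongr
  refine sqrt_variance_le_of_abs_le (hf.add hf₀).aemeasurable (.of_forall fun x ↦ ?_)
  exact (abs_add_le _ _).trans (by linarith [hfb x, hf₀b x])
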